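/- Let l, m be positive integers with l ≤ m. Then f([l,m]) = Σ_{d=1}^{m} μ(d) · (2^{⌊m/d⌋ − ⌊(l−1)/d⌋} − 1). -/

import Mathlib

lemma aux_count (l m d : ℕ) (hl : 0 < l) (h : l ≤ m) :
    ((Finset.Icc l m).filter (d ∣ ·)).card = m / d - (l - 1) / d := by
  have h1 := Nat.Ioc_filter_dvd_card_eq_div m d
  have h2 := Nat.Ioc_filter_dvd_card_eq_div (l - 1) d
  have h3 : (Finset.Ioc 0 m).filter (d ∣ ·)
      = (Finset.Ioc 0 (l - 1)).filter (d ∣ ·) ∪ (Finset.Icc l m).filter (d ∣ ·) := by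
    ext x
    simp only [Finset.mem_filter, Finset.mem_union, Finset.mem_Ioc, Finset.mem_Icc]
    rw [← or_and_right]
    exact and_congr_left fun _ => by omega
  have h4 : Disjoint ((Finset.Ioc 0 (l - 1)).filter (d ∣ ·))
      ((Finset.Icc l m).filter (d ∣ ·)) := by
    rw [Finset.disjoint_left]
    intro x hx hy
    simp only [Finset.mem_filter, Finset.mem_Ioc, Finset.mem_Icc] at hx hy
    omega
  rw [h3, Finset.card_union_of_disjoint h4] at h1
  omega

lemma aux_moebius (n : ℕ) :
    ∑ d ∈ n.divisors, ArithmeticFunction.moebius d = if n = 1 then 1 else 0 := by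
  rw [← ArithmeticFunction.coe_mul_zeta_apply, ArithmeticFunction.moebius_mul_coe_zeta,
    ArithmeticFunction.one_apply]

/-- Corollary (Ayad–Kihel) (a): `f([l,m]) = ∑_{d=1}^{m} μ(d) (2^{⌊m/d⌋ - ⌊(l-1)/d⌋} - 1)`,
where `f(A)` counts the nonempty relatively prime subsets of `A`. -/
theorem stmt_11 (l m : ℕ) (hl : 0 < l) (h : l ≤ m) :
    ((((Finset.Icc l m).powerset).filter
        (fun X : Finset ℕ => X.Nonempty ∧ X.gcd id = 1)).card : ℤ)
      = ∑ d ∈ Finset.Icc 1 m,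
          (ArithmeticFunction.moebius d) * (2 ^ (m / d - (l - 1) / d) - 1) := by
  have key : ∀ d, ((2 : ℤ) ^ (m / d - (l - 1) / d) - 1)
      = ∑ X ∈ (Finset.Icc l m).powerset.filter (fun X : Finset ℕ => X.Nonempty),
        if d ∣ X.gcd id then 1 else 0 := by
    intro d
    have e : ((Finset.Icc l m).powerset.filter (fun X : Finset ℕ => X.Nonempty)).filter
        (fun X => d ∣ X.gcd id) = ((Finset.Icc l m).filter (d ∣ ·)).powerset.erase ∅ := by
      ext X
      simp only [Finset.mem_filter, Finset.mem_powerset, Finset.mem_erase, Finset.dvd_gcd_iff,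
        Finset.nonempty_iff_ne_empty, Finset.subset_iff, id]
      grind
    rw [Finset.sum_boole, e, Finset.card_erase_of_mem (Finset.empty_mem_powerset _),
      Finset.card_powerset, aux_count l m d hl h]
    push_cast [Nat.one_le_two_pow]
    rfl
  simp_rw [key, Finset.mul_sum]
  rw [Finset.sum_comm, ← Finset.filter_filter, ← Finset.sum_boole]
  refine Finset.sum_congr rfl fun X hX => ?_
  simp only [Finset.mem_filter, Finset.mem_powerset] at hX
  obtain ⟨hX, x, hx⟩ := hX
  have hxm := Finset.mem_Icc.1 (hX hx)
  have hdx : X.gcd id ∣ x := Finset.gcd_dvd (f := id) hx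
  have hle := Nat.le_of_dvd (by omega) hdx
  have hpos := Nat.pos_of_dvd_of_pos hdx (by omega)
  rw [← aux_moebius]
  simp only [mul_ite, mul_one, mul_zero]
  rw [← Finset.sum_filter]
  refine Finset.sum_congr ?_ fun _ _ => rfl
  ext d
  simp only [Nat.mem_divisors, Finset.mem_filter, Finset.mem_Icc]
  constructor
  · rintro ⟨hd, -⟩
    exact ⟨⟨Nat.pos_of_dvd_of_pos hd hpos, (Nat.le_of_dvd hpos hd).trans (hle.trans hxm.2)⟩, hd⟩
  · rintro ⟨-, hd⟩
    exact ⟨hd, hpos.ne'⟩
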